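/- Let δ>0 and s ∈ (0,1). The function r ↦ G_δ(s,r) is differentiable on (s,1), and for every r ∈ (s,1), with z = z(s,r) = s(1−r)/(r(1−s)), one has d/dr G_δ(s,r) = −K(δ)·s·z^{−1/2}(1−z)^{δ/2+1} ₂F₁((δ+1)/2,(δ+1)/2,δ/2,z) + (K(δ)/2)·((1−s)/(1−r))·z^{1/2}(1−z)^{δ/2} ₂F₁((δ+1)/2,(δ−1)/2,δ/2,z). -/

import Mathlib

open MeasureTheory Real Filter

/-- Ascending Pochhammer symbol `(a)_k = a(a+1)⋯(a+k-1)`. -/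
noncomputable def poch (a : ℝ) (k : ℕ) : ℝ := ∏ i ∈ Finset.range k, (a + i)

/-- Gauss hypergeometric function `₂F₁(a,b,c,z) = ∑ (a)_k (b)_k / (k! (c)_k) z^k`. -/
noncomputable def hyp2F1 (a b c z : ℝ) : ℝ :=
  ∑' k : ℕ, (poch a k * poch b k) / ((Nat.factorial k : ℝ) * poch c k) * z ^ k

/-- `K(δ) = 2 Γ((δ+1)/2)² / Γ(δ/2)²`. -/
noncomputable def Kcoef (δ : ℝ) : ℝ :=
  2 * Real.Gamma ((δ + 1) / 2) ^ 2 / Real.Gamma (δ / 2) ^ 2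

/-- Two-point kernel `G_δ(s,r)`, equal to the second moment `E^δ[X_s X_r]` of a
δ-dimensional Bessel bridge from 0 to 0 over [0,1]. -/
noncomputable def twoPt (δ s r : ℝ) : ℝ :=
  if s < r then
    Kcoef δ * (r - s) ^ (δ / 2 + 1) * (s * (1 - r)) ^ ((1 : ℝ) / 2) *
      (r * (1 - s)) ^ (-((δ + 1) / 2)) *
      hyp2F1 ((δ + 1) / 2) ((δ + 1) / 2) (δ / 2) (s * (1 - r) / (r * (1 - s)))
  else
    Kcoef δ * (s - r) ^ (δ / 2 + 1) * (r * (1 - s)) ^ ((1 : ℝ) / 2) *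
      (s * (1 - r)) ^ (-((δ + 1) / 2)) *
      hyp2F1 ((δ + 1) / 2) ((δ + 1) / 2) (δ / 2) (r * (1 - s) / (s * (1 - r)))

/-- Coefficient `D(s,r)`. -/
noncomputable def Dcoef (s r : ℝ) : ℝ :=
  if s < r then (1 - s) / ((r - s) * (1 - r)) else s / (r * (s - r))

/-- Coefficient `C_k = Γ(k+(δ+1)/2)/(Γ(δ/2) Γ(k+δ/2) k!)`. -/
noncomputable def Ccoef (δ : ℝ) (k : ℕ) : ℝ :=
  Real.Gamma ((k : ℝ) + (δ + 1) / 2) /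
    (Real.Gamma (δ / 2) * Real.Gamma ((k : ℝ) + δ / 2) * (Nat.factorial k : ℝ))

/-- Coefficient `f_k(s,r)`. -/
noncomputable def fcoef (s r : ℝ) (k : ℕ) : ℝ :=
  if s < r then (2 * (r - s)) ^ ((1 : ℝ) / 2 - (k : ℝ)) * (s / r) ^ ((k : ℝ) + 1 / 2)
  else (2 * (s - r)) ^ ((1 : ℝ) / 2 - (k : ℝ)) * ((1 - s) / (1 - r)) ^ ((k : ℝ) + 1 / 2)

/-- `Σ^δ_{r,s}(b) = Σ^δ_r(X_s | b)`, the density-weighted conditional expectation of a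
δ-dimensional Bessel bridge. -/
noncomputable def SigmaRS (δ r s b : ℝ) : ℝ :=
  ((2 : ℝ) ^ (δ / 2 - 1) * (r * (1 - r)) ^ (δ / 2))⁻¹ *
    Real.exp (-(Dcoef s r) * b ^ 2 / 2) *
    ∑' k : ℕ, Ccoef δ k * fcoef s r k * b ^ (2 * k)

/-- Coefficient of the hypergeometric series. -/
noncomputable def hcf (a b c : ℝ) (k : ℕ) : ℝ :=
  (poch a k * poch b k) / ((Nat.factorial k : ℝ) * poch c k)

lemma poch_succ (a : ℝ) (k : ℕ) : poch a (k + 1) = poch a k * (a + k) := by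
  simp [poch, Finset.prod_range_succ]

lemma poch_pos {a : ℝ} (ha : 0 < a) (k : ℕ) : 0 < poch a k := by
  unfold poch
  exact Finset.prod_pos (fun i _ => by positivity)

lemma poch_shift (a : ℝ) (k : ℕ) : poch (a - 1) (k + 1) = (a - 1) * poch a k := by
  induction k with
  | zero => simp [poch]
  | succ n ih =>
    rw [poch_succ, ih, poch_succ]
    push_cast
    ring

lemma hcf_pos {a c : ℝ} (ha : 0 < a) (hc : 0 < c) (k : ℕ) : 0 < hcf a a c k := by
  unfold hcf
  have := poch_pos ha k
  have := poch_pos hc k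
  positivity

lemma hcf_succ {a c : ℝ} (hc : 0 < c) (k : ℕ) :
    hcf a a c (k + 1) * ((k + 1) * (c + k)) = hcf a a c k * (a + k) ^ 2 := by
  unfold hcf
  have h1 := poch_pos hc k
  have h2 : 0 < c + k := by positivity
  have h3 : (0 : ℝ) < Nat.factorial k := by positivity
  rw [poch_succ, poch_succ, Nat.factorial_succ]
  push_cast
  field_simp

lemma hcf_H {a : ℝ} (ha : 0 < a - 1 / 2) (k : ℕ) :
    hcf a (a - 1) (a - 1 / 2) (k + 1) =
      hcf a a (a - 1 / 2) (k + 1) - 2 * ((k + 1) * hcf a a (a - 1 / 2) (k + 1))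
        + 2 * ((a + k) * hcf a a (a - 1 / 2) k) := by
  have h0 : (0 : ℝ) < a + k := by
    have : (0 : ℝ) ≤ k := Nat.cast_nonneg k
    linarith
  have h1 := hcf_succ (a := a) ha k
  have h2 : hcf a (a - 1) (a - 1 / 2) (k + 1) * (a + k)
      = (a - 1) * hcf a a (a - 1 / 2) (k + 1) := by
    unfold hcf
    rw [poch_shift, poch_succ a k]
    ring
  apply mul_right_cancel₀ h0.ne'
  rw [h2]
  linear_combination 2 * h1

lemma summable_B {a c : ℝ} (ha : 0 < a) (hc : 0 < c) {ρ : ℝ} (h0 : 0 < ρ) (h1 : ρ < 1) :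
    Summable (fun k : ℕ => (k : ℝ) * hcf a a c k * ρ ^ (k - 1)) := by
  rw [← summable_nat_add_iff 1]
  have key : Tendsto (fun k : ℕ => (1 + a * ((k : ℝ) + 1)⁻¹) *
      (1 + (a - c) * (c + ((k : ℝ) + 1))⁻¹) * ρ) atTop (nhds ((1 + a * 0) * (1 + (a - c) * 0) * ρ)) := by
    have t1 : Tendsto (fun k : ℕ => (k : ℝ) + 1) atTop atTop :=
      tendsto_atTop_add_const_right _ _ tendsto_natCast_atTop_atTop
    have t2 : Tendsto (fun k : ℕ => c + ((k : ℝ) + 1)) atTop atTop :=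
      tendsto_atTop_add_const_left _ _ t1
    have t3 := tendsto_inv_atTop_zero.comp t1
    have t4 := tendsto_inv_atTop_zero.comp t2
    exact ((tendsto_const_nhds.add (tendsto_const_nhds.mul t3)).mul
      (tendsto_const_nhds.add (tendsto_const_nhds.mul t4))).mul tendsto_const_nhds
  refine summable_of_ratio_test_tendsto_lt_one h1 ?_ (?_ : Tendsto _ _ _)
  · filter_upwards with k
    have := hcf_pos ha hc (k + 1)
    simp only [Nat.add_sub_cancel]
    positivity
  · have e : (1 + a * 0) * (1 + (a - c) * 0) * ρ = ρ := by ring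
    rw [e] at key
    refine key.congr ?_
    intro k
    have p1 := hcf_pos ha hc (k + 1)
    have p2 := hcf_pos ha hc (k + 1 + 1)
    have p3 := hcf_succ (a := a) hc (k + 1)
    have p4 : 0 < c + ((k : ℝ) + 1) := by positivity
    have p5 : (0 : ℝ) < (k : ℝ) + 1 := by positivity
    simp only [Nat.add_sub_cancel]
    push_cast at p3 ⊢
    rw [Real.norm_of_nonneg (by positivity), Real.norm_of_nonneg (by positivity)]
    rw [eq_div_iff (by positivity)]
    field_simp
    linear_combination (-ρ ^ (k + 1)) * p3

lemma hyp_facts {a c : ℝ} (ha : 0 < a) (hc : 0 < c) {z : ℝ} (h0 : 0 < z) (h1 : z < 1) :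
    Summable (fun k : ℕ => hcf a a c k * z ^ k) ∧
    HasDerivAt (hyp2F1 a a c) (∑' k : ℕ, (k : ℝ) * hcf a a c k * z ^ (k - 1)) z := by
  obtain ⟨ρ, hz, hρ⟩ := exists_between h1
  have hρ0 : 0 < ρ := h0.trans hz
  have hS := summable_B ha hc hρ0 hρ
  have hder : ∀ (n : ℕ) (y : ℝ), y ∈ Set.Ioo (-ρ) ρ →
      HasDerivAt (fun x : ℝ => hcf a a c n * x ^ n) ((n : ℝ) * hcf a a c n * y ^ (n - 1)) y := by
    intro n y _
    have := (hasDerivAt_pow n y).const_mul (hcf a a c n)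
    exact this.congr_deriv (by ring)
  have hbd : ∀ (n : ℕ) (y : ℝ), y ∈ Set.Ioo (-ρ) ρ →
      ‖(n : ℝ) * hcf a a c n * y ^ (n - 1)‖ ≤ (n : ℝ) * hcf a a c n * ρ ^ (n - 1) := by
    intro n y hy
    have := hcf_pos ha hc n
    rw [norm_mul, norm_pow, Real.norm_of_nonneg (by positivity)]
    have hy' : ‖y‖ ≤ ρ := by
      rw [Real.norm_eq_abs, abs_le]; exact ⟨hy.1.le, hy.2.le⟩
    gcongr
  have h00 : (0 : ℝ) ∈ Set.Ioo (-ρ) ρ := ⟨by linarith, hρ0⟩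
  have hzm : z ∈ Set.Ioo (-ρ) ρ := ⟨by linarith, hz⟩
  have hs0 : Summable (fun n : ℕ => hcf a a c n * (0 : ℝ) ^ n) := by
    apply summable_of_ne_finset_zero (s := {0})
    intro b hb
    have : b ≠ 0 := by simpa using hb
    simp [this]
  have r1 := summable_of_summable_hasDerivAt_of_isPreconnected hS isOpen_Ioo isPreconnected_Ioo
      hder hbd h00 hs0 hzm
  have r2 := hasDerivAt_tsum_of_isPreconnected hS isOpen_Ioo isPreconnected_Ioo
      hder hbd h00 hs0 hzm
  have e : hyp2F1 a a c = fun x : ℝ => ∑' k : ℕ, hcf a a c k * x ^ k := rfl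
  rw [e]
  exact ⟨r1, r2⟩

lemma hyp_deriv {a : ℝ} (ha : 0 < a - 1 / 2) {z : ℝ} (h0 : 0 < z) (h1 : z < 1) :
    ∃ D : ℝ, HasDerivAt (hyp2F1 a a (a - 1 / 2)) D z ∧
      hyp2F1 a (a - 1) (a - 1 / 2) z =
        (1 + 2 * a * z) * hyp2F1 a a (a - 1 / 2) z - 2 * z * (1 - z) * D := by
  have ha0 : 0 < a := by linarith
  obtain ⟨hs, hd⟩ := hyp_facts ha0 ha h0 h1
  refine ⟨_, hd, ?_⟩
  have hD := (summable_B ha0 ha h0 h1).hasSum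
  have hF : HasSum (fun k : ℕ => hcf a a (a - 1 / 2) k * z ^ k) (hyp2F1 a a (a - 1 / 2) z) :=
    hs.hasSum
  set D := ∑' k : ℕ, (k : ℝ) * hcf a a (a - 1 / 2) k * z ^ (k - 1)
  set F := hyp2F1 a a (a - 1 / 2) z
  have hzD : HasSum (fun k : ℕ => (k : ℝ) * hcf a a (a - 1 / 2) k * z ^ k) (z * D) := by
    refine (hD.mul_left z).congr_fun ?_ |> id
    intro k
    cases k with
    | zero => simp
    | succ n => simp only [Nat.add_sub_cancel]; ring
  have hc0 : hcf a a (a - 1 / 2) 0 = 1 := by simp [hcf, poch]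
  have hc0' : hcf a (a - 1) (a - 1 / 2) 0 = 1 := by simp [hcf, poch]
  have hF' := (hasSum_nat_add_iff' 1).2 hF
  have hzD' := (hasSum_nat_add_iff' 1).2 hzD
  have hE := ((hF.mul_left a).add hzD).mul_left (2 * z)
  have tot := (hF'.sub (hzD'.mul_left 2)).add hE
  have hH : HasSum (fun k : ℕ => hcf a (a - 1) (a - 1 / 2) k * z ^ k)
      ((1 + 2 * a * z) * F - 2 * z * (1 - z) * D) := by
    rw [← hasSum_nat_add_iff' 1]
    convert tot using 1
    · funext k
      rw [hcf_H ha]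
      push_cast
      ring
    · simp only [Finset.sum_range_one, hc0, hc0', pow_zero, Nat.cast_zero]
      ring
  exact hH.tsum_eq

theorem twoPt_first_derivative_right (δ : ℝ) (hδ : 0 < δ) (s : ℝ) (hs : s ∈ Set.Ioo (0 : ℝ) 1)
    (r : ℝ) (hr : r ∈ Set.Ioo s 1) :
    HasDerivAt (fun r => twoPt δ s r)
      (-(Kcoef δ) * s * (s * (1 - r) / (r * (1 - s))) ^ (-(1 : ℝ) / 2) *
          (1 - s * (1 - r) / (r * (1 - s))) ^ (δ / 2 + 1) *
          hyp2F1 ((δ + 1) / 2) ((δ + 1) / 2) (δ / 2) (s * (1 - r) / (r * (1 - s)))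
        + Kcoef δ / 2 * ((1 - s) / (1 - r)) * (s * (1 - r) / (r * (1 - s))) ^ ((1 : ℝ) / 2) *
          (1 - s * (1 - r) / (r * (1 - s))) ^ (δ / 2) *
          hyp2F1 ((δ + 1) / 2) ((δ - 1) / 2) (δ / 2) (s * (1 - r) / (r * (1 - s)))) r := by
  obtain ⟨hs0, hs1⟩ := hs
  have h1s : 0 < 1 - s := by linarith
  have hz_facts : ∀ x ∈ Set.Ioo s 1, 0 < s * (1 - x) / (x * (1 - s)) ∧
      1 - s * (1 - x) / (x * (1 - s)) = (x - s) / (x * (1 - s)) ∧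
      0 < (x - s) / (x * (1 - s)) := by
    intro x hx
    have hx0 : 0 < x := hs0.trans hx.1
    have hx1 : 0 < 1 - x := by linarith [hx.2]
    have hxs : 0 < x - s := by linarith [hx.1]
    refine ⟨by positivity, ?_, by positivity⟩
    field_simp
    ring
  have hG : (fun r => twoPt δ s r) =ᶠ[nhds r] fun x =>
      Kcoef δ * (x * (1 - s)) * (s * (1 - x) / (x * (1 - s))) ^ ((1 : ℝ) / 2) *
        (1 - s * (1 - x) / (x * (1 - s))) ^ (δ / 2 + 1) *
        hyp2F1 ((δ + 1) / 2) ((δ + 1) / 2) (δ / 2) (s * (1 - x) / (x * (1 - s))) := by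
    filter_upwards [isOpen_Ioo.mem_nhds hr] with x hx
    have hx0 : 0 < x := hs0.trans hx.1
    have hx1 : 0 < 1 - x := by linarith [hx.2]
    have hxs : 0 < x - s := by linarith [hx.1]
    rw [(hz_facts x hx).2.1]
    simp only [twoPt, if_pos hx.1]
    have hw : 0 < x * (1 - s) := by positivity
    rw [Real.div_rpow (by positivity) hw.le, Real.div_rpow hxs.le hw.le]
    have e : (x * (1 - s)) ^ (-((δ + 1) / 2)) =
        (x * (1 - s)) / ((x * (1 - s)) ^ ((1 : ℝ) / 2) * (x * (1 - s)) ^ (δ / 2 + 1)) := by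
      rw [← Real.rpow_add hw, eq_div_iff (Real.rpow_pos_of_pos hw _).ne', ← Real.rpow_add hw]
      conv_rhs => rw [← Real.rpow_one (x * (1 - s))]
      congr 1
      ring
    rw [e]
    have := Real.rpow_pos_of_pos hw ((1 : ℝ) / 2)
    have := Real.rpow_pos_of_pos hw (δ / 2 + 1)
    field_simp
  refine HasDerivAt.congr_of_eventuallyEq ?_ hG
  have hr0 : 0 < r := hs0.trans hr.1
  have hr1 : 0 < 1 - r := by linarith [hr.2]
  obtain ⟨hz0, hz1, hz2⟩ := hz_facts r hr
  have hzd : HasDerivAt (fun x => s * (1 - x) / (x * (1 - s))) (-s / (r ^ 2 * (1 - s))) r := by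
    have h1 : HasDerivAt (fun x : ℝ => s * (1 - x)) (s * (-1)) r :=
      ((hasDerivAt_id r).const_sub 1).const_mul s
    have h2 : HasDerivAt (fun x : ℝ => x * (1 - s)) (1 * (1 - s)) r :=
      (hasDerivAt_id r).mul_const (1 - s)
    have h3 := h1.div h2 (by positivity)
    refine h3.congr_deriv ?_
    field_simp
    ring
  have ha : 0 < (δ + 1) / 2 - 1 / 2 := by linarith
  obtain ⟨D, hD, hH⟩ := hyp_deriv ha hz0 (by linarith : s * (1 - r) / (r * (1 - s)) < 1)
  rw [show (δ + 1) / 2 - 1 / 2 = δ / 2 by ring] at hD hH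
  rw [show (δ + 1) / 2 - 1 = (δ - 1) / 2 by ring] at hH
  have hy0 : 0 < 1 - s * (1 - r) / (r * (1 - s)) := by rw [hz1]; exact hz2
  have d1 := hzd.rpow_const (p := (1 : ℝ) / 2) (Or.inl hz0.ne')
  have d2 := (hzd.const_sub 1).rpow_const (p := δ / 2 + 1) (Or.inl hy0.ne')
  have d3 := HasDerivAt.comp r hD hzd
  have d0 : HasDerivAt (fun x : ℝ => Kcoef δ * (x * (1 - s))) (Kcoef δ * (1 * (1 - s))) r :=
    ((hasDerivAt_id r).mul_const (1 - s)).const_mul _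
  have d := ((d0.mul d1).mul d2).mul d3
  refine d.congr_deriv ?_
  rw [hH]
  have hzr : s / r = s * (1 - r) / (r * (1 - s)) * ((1 - s) / (1 - r)) := by field_simp
  have hzs : (1 - s) * (s * (1 - r) / (r * (1 - s))) = s / r - s := by field_simp
  simp only [Function.comp, Pi.mul_apply]
  have hzs2 : s = r * (1 - s) * (s * (1 - r) / (r * (1 - s))) / (1 - r) := by field_simp
  set z := s * (1 - r) / (r * (1 - s)) with hzdef
  set F := hyp2F1 ((δ + 1) / 2) ((δ + 1) / 2) (δ / 2) z
  have q1 : z ^ ((1 : ℝ) / 2) = z ^ (-(1 : ℝ) / 2) * z := by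
    rw [← Real.rpow_add_one hz0.ne']; norm_num
  have q2 : z ^ ((1 : ℝ) / 2 - 1) = z ^ (-(1 : ℝ) / 2) := by norm_num
  have q3 : (1 - z) ^ (δ / 2 + 1) = (1 - z) ^ (δ / 2) * (1 - z) := Real.rpow_add_one hy0.ne' _
  have q4 : δ / 2 + 1 - 1 = δ / 2 := by ring
  rw [q2, q4, q1, q3]
  generalize z ^ (-(1 : ℝ) / 2) = P
  generalize (1 - z) ^ (δ / 2) = Q
  have hzp : -s / (r ^ 2 * (1 - s)) = -(s / r) / (r * (1 - s)) := by field_simp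
  rw [hzp]
  generalize hw : r * (1 - s) = w at *
  have hwpos : 0 < w := by rw [← hw]; positivity
  generalize hu : (1 - s) / (1 - r) = u at *
  generalize hv : s / r = v at *
  have hsv : s = v - (1 - s) * z := by linarith
  have goal2 : ∀ m : ℝ, v = z * u → s = v - m * z → 
    (Kcoef δ * (1 * m) * (P * z) + Kcoef δ * w * (-v / w * (1 / 2) * P)) * (Q * (1 - z)) * F
     + Kcoef δ * w * (P * z) * (-(-v / w) * (δ / 2 + 1) * Q) * F
     + Kcoef δ * w * (P * z) * (Q * (1 - z)) * (D * (-v / w)) =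
    -Kcoef δ * s * P * (Q * (1 - z)) * F + Kcoef δ / 2 * u * (P * z) * Q *
      ((1 + 2 * ((δ + 1) / 2) * z) * F - 2 * z * (1 - z) * D) := by
    intro m e1 e2
    rw [e2, e1]
    field_simp
    ring
  have := goal2 (1 - s) hzr hsv
  linear_combination this
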